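/- Let p be a positive rational number with √p irrational, let a, b be rational numbers, and set x = a + b√p. If x > 0 and a − b√p < 0, then b√p − a ∈ B(x), and moreover q·√p ∈ B(x) for every positive rational number q. -/

import Mathlib

/-- `R` is an axis-parallel closed rectangle with side lengths `w` (horizontal)
and `h` (vertical), both positive. -/
def IsRect (R : Set (ℝ × ℝ)) (w h : ℝ) : Prop :=
  0 < w ∧ 0 < h ∧ ∃ x y : ℝ, R = Set.Icc x (x + w) ×ˢ Set.Icc y (y + h)

/-- The rectangle `R` is tiled by finitely many axis-parallel rectangles, each of
whose side ratios belongs to `ratios`: the tiles cover `R` and have pairwise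
disjoint interiors. -/
def TiledBy (R : Set (ℝ × ℝ)) (ratios : Set ℝ) : Prop :=
  ∃ (m : ℕ) (T : Fin m → Set (ℝ × ℝ)) (w h : Fin m → ℝ),
    (∀ i, IsRect (T i) (w i) (h i)) ∧
    (∀ i, w i / h i ∈ ratios ∨ h i / w i ∈ ratios) ∧
    (⋃ i, T i) = R ∧
    Pairwise fun i j => Disjoint (interior (T i)) (interior (T j))

/-- `BSet ratios` is the set of positive reals `z` such that some axis-parallel
rectangle with side ratio `z` can be tiled by finitely many axis-parallel
rectangles each of whose side ratio belongs to `ratios`. -/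
def BSet (ratios : Set ℝ) : Set ℝ :=
  {z | ∃ (W H : ℝ) (R : Set (ℝ × ℝ)),
    IsRect R W H ∧ (z = W / H ∨ z = H / W) ∧ TiledBy R ratios}

/-!
`B(S)` is closed under reciprocals (`s / t` and `t / s` both count as side ratios of a rectangle),
under sums (rescale two tiled rectangles to a common height and put them side by side), and hence
under multiplication by positive rationals. For `x = a + b√p` and `y = b√p - a`, both
`x y = b² p - a²` and `(x + y) / √p = 2 b` are positive rationals, so `y = (x y) x⁻¹` and
`q √p = (q / (2 b)) (x + y)` lie in `B(x)`.
-/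

/-- `Q` is a single admissible tile: a rectangle one of whose two side quotients lies in `ratios`.
It hides the side lengths that `TiledBy` carries as separate families. -/
def IsTile (Q : Set (ℝ × ℝ)) (ratios : Set ℝ) : Prop :=
  ∃ w h : ℝ, IsRect Q w h ∧ (w / h ∈ ratios ∨ h / w ∈ ratios)

section Tilings

variable {R S : Set (ℝ × ℝ)} {ratios : Set ℝ}

theorem tiledBy_iff_exists_finite : TiledBy R ratios ↔
    ∃ (ι : Type) (_ : Finite ι) (T : ι → Set (ℝ × ℝ)), (∀ i, IsTile (T i) ratios) ∧
      (⋃ i, T i) = R ∧ Pairwise fun i j => Disjoint (interior (T i)) (interior (T j)) := by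
  constructor
  · rintro ⟨m, T, w, h, rect, ratio, cover, disj⟩
    exact ⟨Fin m, inferInstance, T, fun i => ⟨w i, h i, rect i, ratio i⟩, cover, disj⟩
  · rintro ⟨ι, _, T, tile, cover, disj⟩
    choose w h rect ratio using tile
    obtain ⟨m, ⟨e⟩⟩ := Finite.exists_equiv_fin ι
    exact ⟨m, T ∘ e.symm, w ∘ e.symm, h ∘ e.symm, fun i => rect _, fun i => ratio _,
      (e.symm.surjective.iUnion_comp T).trans cover, disj.comp_of_injective e.symm.injective⟩

theorem IsTile.tiledBy (hR : IsTile R ratios) : TiledBy R ratios :=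
  tiledBy_iff_exists_finite.2
    ⟨Unit, inferInstance, fun _ => R, fun _ => hR, Set.iUnion_const R, Subsingleton.pairwise⟩

theorem TiledBy.union (hR : TiledBy R ratios) (hS : TiledBy S ratios)
    (hRS : Disjoint (interior R) (interior S)) : TiledBy (R ∪ S) ratios := by
  rw [tiledBy_iff_exists_finite] at *
  obtain ⟨ι, _, T, tileT, rfl, disjT⟩ := hR
  obtain ⟨κ, _, U, tileU, rfl, disjU⟩ := hS
  have disjTU (i j) : Disjoint (interior (T i)) (interior (U j)) :=
    hRS.mono (interior_mono (Set.subset_iUnion T i)) (interior_mono (Set.subset_iUnion U j))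
  refine ⟨ι ⊕ κ, inferInstance, Sum.elim T U, Sum.rec tileT tileU, Set.iUnion_sum, ?_⟩
  rintro (i | i) (j | j) hij
  · exact disjT (ne_of_apply_ne Sum.inl hij)
  · exact disjTU i j
  · exact (disjTU j i).symm
  · exact disjU (ne_of_apply_ne Sum.inr hij)

theorem TiledBy.image (e : ℝ × ℝ ≃ₜ ℝ × ℝ)
    (he : ∀ Q, IsTile Q ratios → IsTile (e '' Q) ratios) (hR : TiledBy R ratios) :
    TiledBy (e '' R) ratios := by
  rw [tiledBy_iff_exists_finite] at *
  obtain ⟨ι, _, T, tile, rfl, disj⟩ := hR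
  refine ⟨ι, inferInstance, fun i => e '' T i, fun i => he _ (tile i), Set.image_iUnion.symm, ?_⟩
  intro i j hij
  simpa only [← e.image_interior, Set.disjoint_image_iff e.injective] using disj hij

end Tilings

section Similarities

variable {R : Set (ℝ × ℝ)} {ratios : Set ℝ} {w h c : ℝ}

theorem IsRect.image_prodComm (hR : IsRect R w h) : IsRect (Homeomorph.prodComm ℝ ℝ '' R) h w := by
  obtain ⟨hw, hh, x, y, rfl⟩ := hR
  exact ⟨hh, hw, y, x, Set.image_swap_prod _ _⟩

theorem TiledBy.image_prodComm (hR : TiledBy R ratios) :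
    TiledBy (Homeomorph.prodComm ℝ ℝ '' R) ratios :=
  hR.image _ fun _ ⟨_, _, rect, ratio⟩ => ⟨_, _, rect.image_prodComm, ratio.symm⟩

/-- The homothety `(s, t) ↦ (c s + u, c t + v)` of the plane. -/
noncomputable def planeHomothety (c : ℝ) (hc : c ≠ 0) (u v : ℝ) : ℝ × ℝ ≃ₜ ℝ × ℝ :=
  (affineHomeomorph c u hc).prodCongr (affineHomeomorph c v hc)

theorem planeHomothety_image_Icc_prod_Icc (hc : 0 < c) (u v x y : ℝ) :
    planeHomothety c hc.ne' u v '' (Set.Icc x (x + w) ×ˢ Set.Icc y (y + h)) =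
      Set.Icc (c * x + u) (c * x + u + c * w) ×ˢ Set.Icc (c * y + v) (c * y + v + c * h) := by
  simp only [planeHomothety, Homeomorph.coe_prodCongr, Set.prodMap_image_prod,
    affineHomeomorph_image_Icc _ _ _ _ hc, mul_add, add_right_comm]

theorem IsRect.image_planeHomothety (hR : IsRect R w h) (hc : 0 < c) (u v : ℝ) :
    IsRect (planeHomothety c hc.ne' u v '' R) (c * w) (c * h) := by
  obtain ⟨hw, hh, x, y, rfl⟩ := hR
  exact ⟨mul_pos hc hw, mul_pos hc hh, _, _, planeHomothety_image_Icc_prod_Icc hc u v x y⟩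

theorem TiledBy.image_planeHomothety (hR : TiledBy R ratios) (hc : 0 < c) (u v : ℝ) :
    TiledBy (planeHomothety c hc.ne' u v '' R) ratios := by
  refine hR.image _ fun _ ⟨w, h, rect, ratio⟩ => ⟨_, _, rect.image_planeHomothety hc u v, ?_⟩
  rwa [mul_div_mul_left _ _ hc.ne', mul_div_mul_left _ _ hc.ne']

theorem TiledBy.of_div_eq_div {R' : Set (ℝ × ℝ)} {w' h' : ℝ} (tiled : TiledBy R ratios)
    (hR : IsRect R w h) (hR' : IsRect R' w' h') (hratio : w' / h' = w / h) :
    TiledBy R' ratios := by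
  obtain ⟨_, hh, x, y, rfl⟩ := hR
  obtain ⟨_, hh', x', y', rfl⟩ := hR'
  have hw' : w' = h' / h * w := by rw [(div_eq_iff hh'.ne').1 hratio]; ring
  have image := tiled.image_planeHomothety (div_pos hh' hh) (x' - h' / h * x) (y' - h' / h * y)
  rwa [planeHomothety_image_Icc_prod_Icc (div_pos hh' hh), add_sub_cancel, add_sub_cancel, ← hw',
    div_mul_cancel₀ _ hh.ne'] at image

theorem IsRect.tiledBy_of_div_mem_BSet (hR : IsRect R w h) (hmem : w / h ∈ BSet ratios) :
    TiledBy R ratios := by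
  obtain ⟨w₀, h₀, R₀, hR₀, hratio | hratio, tiled⟩ := hmem
  · exact tiled.of_div_eq_div hR₀ hR hratio
  · exact tiled.image_prodComm.of_div_eq_div hR₀.image_prodComm hR hratio

end Similarities

section Closure

variable {ratios : Set ℝ} {x y z : ℝ}

theorem pos_of_mem_BSet (hz : z ∈ BSet ratios) : 0 < z := by
  obtain ⟨w, h, R, ⟨hw, hh, -⟩, rfl | rfl, -⟩ := hz
  · exact div_pos hw hh
  · exact div_pos hh hw

theorem mem_BSet_of_mem (hz : z ∈ ratios) (hpos : 0 < z) : z ∈ BSet ratios := by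
  have rect : IsRect (Set.Icc 0 (0 + z) ×ˢ Set.Icc 0 (0 + 1)) z 1 :=
    ⟨hpos, one_pos, 0, 0, rfl⟩
  exact ⟨z, 1, _, rect, .inl (div_one z).symm,
    IsTile.tiledBy ⟨z, 1, rect, .inl ((div_one z).symm ▸ hz)⟩⟩

theorem inv_mem_BSet (hz : z ∈ BSet ratios) : z⁻¹ ∈ BSet ratios := by
  obtain ⟨w, h, R, rect, ratio, tiled⟩ := hz
  refine ⟨w, h, R, rect, ?_, tiled⟩
  rw [inv_eq_iff_eq_inv, inv_eq_iff_eq_inv, inv_div, inv_div]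
  exact ratio.symm

theorem disjoint_interior_Icc_prod_Icc (a b c : ℝ) (s t : Set ℝ) :
    Disjoint (interior (Set.Icc a b ×ˢ s)) (interior (Set.Icc b c ×ˢ t)) := by
  rw [interior_prod_eq, interior_prod_eq, interior_Icc, interior_Icc]
  have sides : Disjoint (Set.Ioo a b) (Set.Ioo b c) :=
    Set.Ioo_disjoint_Ioo.2 ((min_le_left b c).trans (le_max_right a b))
  exact Set.disjoint_prod.2 (.inl sides)

theorem add_mem_BSet (hy : y ∈ BSet ratios) (hz : z ∈ BSet ratios) : y + z ∈ BSet ratios := by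
  have hy₀ := pos_of_mem_BSet hy
  have hz₀ := pos_of_mem_BSet hz
  have left : TiledBy (Set.Icc 0 y ×ˢ Set.Icc 0 1) ratios :=
    IsRect.tiledBy_of_div_mem_BSet (w := y) (h := 1)
      ⟨hy₀, one_pos, 0, 0, by simp only [zero_add]⟩ (by rwa [div_one])
  have right : TiledBy (Set.Icc y (y + z) ×ˢ Set.Icc 0 1) ratios :=
    IsRect.tiledBy_of_div_mem_BSet (w := z) (h := 1)
      ⟨hz₀, one_pos, y, 0, by simp only [zero_add]⟩ (by rwa [div_one])
  have glued := left.union right (disjoint_interior_Icc_prod_Icc _ _ _ _ _)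
  rw [← Set.union_prod, Set.Icc_union_Icc_eq_Icc hy₀.le (by linarith)] at glued
  exact ⟨y + z, 1, _, ⟨add_pos hy₀ hz₀, one_pos, 0, 0, by simp only [zero_add]⟩,
    .inl (div_one _).symm, glued⟩

theorem natCast_mul_mem_BSet (hz : z ∈ BSet ratios) {n : ℕ} (hn : 0 < n) :
    n * z ∈ BSet ratios := by
  induction n, hn using Nat.le_induction with
  | base => simpa using hz
  | succ n _ ih =>
    rw [Nat.cast_succ, add_one_mul]
    exact add_mem_BSet ih hz

theorem div_natCast_mem_BSet (hz : z ∈ BSet ratios) {n : ℕ} (hn : 0 < n) :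
    z / n ∈ BSet ratios := by
  have := inv_mem_BSet (natCast_mul_mem_BSet (inv_mem_BSet hz) hn)
  rwa [mul_inv, inv_inv, ← div_eq_inv_mul] at this

theorem ratCast_mul_mem_BSet (hz : z ∈ BSet ratios) {q : ℚ} (hq : 0 < q) :
    q * z ∈ BSet ratios := by
  lift q to ℚ≥0 using hq.le
  have := div_natCast_mem_BSet (natCast_mul_mem_BSet hz (NNRat.num_pos.2 (mod_cast hq))) q.den_pos
  rwa [mul_div_right_comm, ← NNRat.cast_def] at this

theorem mem_BSet_of_mul_eq_ratCast (hx : x ∈ BSet ratios) {q : ℚ} (hq : 0 < q)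
    (hxy : x * y = q) : y ∈ BSet ratios := by
  rw [(eq_inv_mul_iff_mul_eq₀ (pos_of_mem_BSet hx).ne').2 hxy, mul_comm]
  exact ratCast_mul_mem_BSet (inv_mem_BSet hx) hq

end Closure

theorem stmt_8_general (p : ℚ) (hp : 0 ≤ p) (a b : ℚ) (x : ℝ)
    (hx : x = (a : ℝ) + (b : ℝ) * Real.sqrt p)
    (hxpos : 0 < x) (hconj : (a : ℝ) - (b : ℝ) * Real.sqrt p < 0) :
    ((b : ℝ) * Real.sqrt p - (a : ℝ) ∈ BSet {x}) ∧
      ∀ q : ℚ, 0 < q → (q : ℝ) * Real.sqrt p ∈ BSet {x} := by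
  have hsq : Real.sqrt p ^ 2 = p := Real.sq_sqrt (mod_cast hp)
  have hprod : x * (b * Real.sqrt p - a) = (b ^ 2 * p - a ^ 2 : ℚ) := by
    push_cast
    linear_combination (b * Real.sqrt p - a) * hx + (b : ℝ) ^ 2 * hsq
  have hprod_pos : 0 < b ^ 2 * p - a ^ 2 := by
    rw [← Rat.cast_pos (K := ℝ), ← hprod]
    exact mul_pos hxpos (by linarith)
  have hb : (0 : ℝ) < b :=
    pos_of_mul_pos_left (show 0 < b * Real.sqrt p by linarith) (Real.sqrt_nonneg _)
  have x_mem : x ∈ BSet {x} := mem_BSet_of_mem rfl hxpos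
  have y_mem := mem_BSet_of_mul_eq_ratCast x_mem hprod_pos hprod
  refine ⟨y_mem, fun q hq => ?_⟩
  have hsum : (q / (2 * b) : ℚ) * (x + (b * Real.sqrt p - a)) = q * Real.sqrt p := by
    push_cast
    rw [hx]
    field_simp
    ring
  rw [← hsum]
  exact ratCast_mul_mem_BSet (add_mem_BSet x_mem y_mem) (div_pos hq (mul_pos two_pos (mod_cast hb)))

/-- Lemma 5: if `x = a + b√p > 0` and its conjugate `a - b√p < 0`, then
`b√p - a ∈ B(x)` and `q√p ∈ B(x)` for every positive rational `q`. -/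
theorem stmt_8 (p : ℚ) (hp : 0 < p) (hirr : Irrational (Real.sqrt p))
    (a b : ℚ) (x : ℝ) (hx : x = (a : ℝ) + (b : ℝ) * Real.sqrt p)
    (hxpos : 0 < x) (hconj : (a : ℝ) - (b : ℝ) * Real.sqrt p < 0) :
    ((b : ℝ) * Real.sqrt p - (a : ℝ) ∈ BSet {x}) ∧
      ∀ q : ℚ, 0 < q → (q : ℝ) * Real.sqrt p ∈ BSet {x} := by
  exact stmt_8_general p hp.le a b x hx hxpos hconj
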